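/- For any graph function α, h ≤ (n−1) · ∑_v ρ_v^R, where h = y_max − y_min is the difference between the maximum and minimum heights and the sum is over all n vertices. -/

import Mathlib

/-!
The limit `r*` of the raising vectors is the least nonnegative vector `r` for which the shifted
graph function `α_{uv} + r_v − r_u` is raising-balanced: one raising step never overtakes such a
vector, and the limit is itself such a vector because `ρ^R` is continuous.

Minimality bounds the gaps between consecutive values of `r*` by `D = ∑_v ρ_v^R`. Given `c ≥ 0`,
let `x` be the largest level among the vertices with `r*_v > c`. If no edge of shifted weight `x`
went from a vertex of level `x` in that set to a vertex with `r*_w ≤ c`, then `r*` could be lowered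
slightly on some of these vertices without destroying balance. So there is such an edge `(v, w)`.
Following maximal incoming edges of `α` backwards from `v`, each step costs at most the imbalance of
the current vertex, and `r*` increases until an edge of weight at most `x` is met, so every
imbalance is paid at most once. Hence `α_{vw} ≤ x + D` and `r*_v ≤ r*_w + D`. The `n` values of `r*`
have at most `n − 1` gaps.
-/

open Filter Topology

variable {V : Type*}

/-- Maximum weight of an edge leaving `v` (as a supremum over the finite edge set). -/
noncomputable def outMax (E : V → V → Prop) (α : V → V → ℝ) (v : V) : ℝ :=
  sSup {x : ℝ | ∃ w, E v w ∧ x = α v w}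

/-- Maximum weight of an edge entering `v`. -/
noncomputable def inMax (E : V → V → Prop) (α : V → V → ℝ) (v : V) : ℝ :=
  sSup {x : ℝ | ∃ u, E u v ∧ x = α u v}

/-- A graph function is balanced if the max outgoing weight equals the max incoming
weight at every vertex. -/
def IsBalancedGF (E : V → V → Prop) (α : V → V → ℝ) : Prop :=
  ∀ v, outMax E α v = inMax E α v

/-- Raising imbalance at `v`. -/
noncomputable def rhoR (E : V → V → Prop) (α : V → V → ℝ) (v : V) : ℝ :=
  max 0 (outMax E α v - inMax E α v)

/-- Lowering imbalance at `v`. -/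
noncomputable def rhoL (E : V → V → Prop) (α : V → V → ℝ) (v : V) : ℝ :=
  max 0 (inMax E α v - outMax E α v)

/-- A balancing operation at `v`: add `(α_v^out − α_v^in)/2` to every edge entering `v`
and subtract the same quantity from every edge leaving `v` (a self-loop is unchanged). -/
noncomputable def balanceAt [DecidableEq V] (E : V → V → Prop) (α : V → V → ℝ) (v : V) :
    V → V → ℝ :=
  fun a b =>
    α a b + (if b = v then (outMax E α v - inMax E α v) / 2 else 0)
          - (if a = v then (outMax E α v - inMax E α v) / 2 else 0)

/-- A raising operation at `v`: balance at `v` if the raising imbalance is positive,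
otherwise do nothing. -/
noncomputable def raiseOp [DecidableEq V] (E : V → V → Prop) (α : V → V → ℝ) (v : V) :
    V → V → ℝ :=
  if 0 < rhoR E α v then balanceAt E α v else α

/-- A lowering operation at `v`: balance at `v` if the lowering imbalance is positive,
otherwise do nothing. -/
noncomputable def lowerOp [DecidableEq V] (E : V → V → Prop) (α : V → V → ℝ) (v : V) :
    V → V → ℝ :=
  if 0 < rhoL E α v then balanceAt E α v else α

/-- A sequence of vertices is fair if every vertex appears infinitely often. -/
def Fair (σ : ℕ → V) : Prop := ∀ (v : V) (N : ℕ), ∃ t, N ≤ t ∧ σ t = v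

/-- State after `t` raising operations along the sequence `σ`. -/
noncomputable def raiseIter [DecidableEq V] (E : V → V → Prop) (α : V → V → ℝ)
    (σ : ℕ → V) : ℕ → V → V → ℝ
  | 0 => α
  | t + 1 => raiseOp E (raiseIter E α σ t) (σ t)

/-- State after `t` lowering operations along the sequence `σ`. -/
noncomputable def lowerIter [DecidableEq V] (E : V → V → Prop) (α : V → V → ℝ)
    (σ : ℕ → V) : ℕ → V → V → ℝ
  | 0 => α
  | t + 1 => lowerOp E (lowerIter E α σ t) (σ t)

/-- The raising vector: cumulative amount by which each vertex has been raised after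
`t` raising operations along `σ`. -/
noncomputable def rvec [DecidableEq V] (E : V → V → Prop) (α : V → V → ℝ)
    (σ : ℕ → V) : ℕ → V → ℝ
  | 0 => fun _ => 0
  | t + 1 => fun u =>
      rvec E α σ t u + (if u = σ t then rhoR E (raiseIter E α σ t) (σ t) / 2 else 0)

/-- State after performing raising operations along a finite list of vertices. -/
noncomputable def raiseList [DecidableEq V] (E : V → V → Prop) :
    (V → V → ℝ) → List V → V → V → ℝ
  | α, [] => α
  | α, v :: l => raiseList E (raiseOp E α v) l

/-- Raising vector accumulated along a finite list of raising operations. -/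
noncomputable def rvecList [DecidableEq V] (E : V → V → Prop) :
    (V → V → ℝ) → List V → V → ℝ
  | _, [] => fun _ => 0
  | α, v :: l => fun u =>
      (if u = v then rhoR E α v / 2 else 0) + rvecList E (raiseOp E α v) l u

/-- State after performing (unconditional) balancing operations along a list. -/
noncomputable def balList [DecidableEq V] (E : V → V → Prop) :
    (V → V → ℝ) → List V → V → V → ℝ
  | α, [] => α
  | α, v :: l => balList E (balanceAt E α v) l

/-- State after `t` balancing operations along the sequence `σ`. -/
noncomputable def balIter [DecidableEq V] (E : V → V → Prop) (α : V → V → ℝ)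
    (σ : ℕ → V) : ℕ → V → V → ℝ
  | 0 => α
  | t + 1 => balanceAt E (balIter E α σ t) (σ t)

/-- Two graph functions are equivalent if their sums around every directed cycle agree. -/
def Equivalent (E : V → V → Prop) (α γ : V → V → ℝ) : Prop :=
  ∀ (k : ℕ) (f : ZMod (k + 1) → V), (∀ i, E (f i) (f (i + 1))) →
    (∑ i, α (f i) (f (i + 1))) = ∑ i, γ (f i) (f (i + 1))

/-- The raising-balanced graph function determined by the limiting raising vector. -/
noncomputable def alphaR (α : V → V → ℝ) (rstar : V → ℝ) : V → V → ℝ :=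
  fun u v => α u v + rstar v - rstar u

/-- Height of a vertex: `y_v = -r*_v`. -/
noncomputable def height (rstar : V → ℝ) (v : V) : ℝ := -rstar v

/-- Level of a vertex: maximum over incoming edges of `α^R`. -/
noncomputable def level (E : V → V → Prop) (α : V → V → ℝ) (rstar : V → ℝ) (v : V) : ℝ :=
  inMax E (alphaR α rstar) v

/-- Momentum of a vertex: `m_v = max over edges (u,v) entering v of (α_{uv} − x_v)`. -/
noncomputable def momentum (E : V → V → Prop) (α : V → V → ℝ) (rstar : V → ℝ) (v : V) : ℝ :=
  sSup {c : ℝ | ∃ u, E u v ∧ c = α u v - level E α rstar v}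

section Order

open scoped Finset

theorem exists_le_map_eq_or_eq_bot {P : Type*} [PartialOrder P] [OrderBot P] [WellFoundedLT P]
    {f : P → P} (hf : Monotone f) {s : P} (hs : f s ≤ s) (hs₀ : s ≠ ⊥) :
    ∃ u ≤ s, u ≠ ⊥ ∧ (f u = u ∨ f u = ⊥) := by
  obtain ⟨u, ⟨hus, hu₀, hfu⟩, hmin⟩ :=
    exists_minimal_of_wellFoundedLT (fun u ↦ u ≤ s ∧ u ≠ ⊥ ∧ f u ≤ u) ⟨s, le_rfl, hs₀, hs⟩
  refine ⟨u, hus, hu₀, or_iff_not_imp_right.2 fun hfu₀ ↦ hfu.antisymm ?_⟩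
  exact hmin ⟨hfu.trans hus, hfu₀, hf hfu⟩ hfu

theorem le_add_card_pred_nsmul_of_gap_le [Fintype V] {M : Type*} [AddCommMonoid M] [LinearOrder M]
    [IsOrderedAddMonoid M] {f : V → M} {D : M} (hD : 0 ≤ D)
    (hgap : ∀ c, (∃ v, f c < f v) → ∃ u, f c < f u ∧ f u ≤ f c + D) (a b : V) :
    f a ≤ f b + (Fintype.card V - 1) • D := by
  have hcount : f a ≤ f b + #{v | f v < f a} • D := by
    have hwf : WellFounded (Function.onFun (· < ·) f) :=
      Set.wellFoundedOn_range.1 (Set.finite_range f).wellFoundedOn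
    induction a using hwf.induction with
    | _ a ih =>
      rcases le_or_gt (f a) (f b) with hab | hba
      · exact le_add_of_le_of_nonneg hab (nsmul_nonneg hD _)
      obtain ⟨c, hca, hcmax⟩ :=
        Set.exists_max_image {v | f v < f a} f (Set.toFinite _) ⟨b, hba⟩
      obtain ⟨u, hcu, huD⟩ := hgap c ⟨a, hca⟩
      have hau : f a ≤ f u := not_lt.1 fun hua ↦ (hcmax u hua).not_gt hcu
      have hcard : #{v | f v < f c} < #{v | f v < f a} := by
        refine Finset.card_lt_card (Finset.ssubset_iff_of_subset ?_ |>.2 ⟨c, ?_⟩)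
        · exact Finset.monotone_filter_right _ fun v _ hv ↦ hv.trans hca
        · simpa using hca
      calc f a ≤ f c + D := hau.trans huD
        _ ≤ f b + #{v | f v < f c} • D + D := by gcongr; exact ih c hca
        _ = f b + (#{v | f v < f c} + 1) • D := by rw [succ_nsmul, add_assoc]
        _ ≤ f b + #{v | f v < f a} • D := by gcongr; exact hcard
  have hcard : #{v | f v < f a} < Fintype.card V :=
    Finset.card_lt_univ_of_notMem (x := a) (by simp)
  exact hcount.trans (by gcongr; exact Nat.le_sub_one_of_lt hcard)

end Order

section Raising

variable {E : V → V → Prop} {α β : V → V → ℝ} {r d : V → ℝ} {u v w : V}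

theorem outMax_eq_iSup : outMax E α v = ⨆ w : {w // E v w}, α v w := by
  simp only [outMax, iSup, Set.range, Subtype.exists, exists_prop, eq_comm]

theorem le_outMax [Finite V] (h : E v w) : α v w ≤ outMax E α v := by
  rw [outMax_eq_iSup]
  exact le_ciSup (f := fun w : {w // E v w} ↦ α v w) (Set.finite_range _).bddAbove ⟨w, h⟩

theorem le_inMax [Finite V] (h : E u v) : α u v ≤ inMax E α v :=
  le_outMax (E := Function.swap E) (α := Function.swap α) h

theorem exists_eq_outMax [Finite V] (hv : ∃ w, E v w) : ∃ w, E v w ∧ α v w = outMax E α v := by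
  have : Nonempty {w // E v w} := nonempty_subtype.2 hv
  obtain ⟨⟨w, hw⟩, hmax⟩ := exists_eq_ciSup_of_finite (f := fun w : {w // E v w} ↦ α v w)
  exact ⟨w, hw, hmax.trans outMax_eq_iSup.symm⟩

theorem exists_eq_inMax [Finite V] (hv : ∃ u, E u v) : ∃ u, E u v ∧ α u v = inMax E α v :=
  exists_eq_outMax (E := Function.swap E) (α := Function.swap α) hv

theorem continuous_outMax [Finite V] : Continuous fun α ↦ outMax E α v := by
  simp only [outMax_eq_iSup]
  rcases isEmpty_or_nonempty {w // E v w} with _ | _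
  · simpa only [Real.iSup_of_isEmpty] using continuous_const
  · have := Fintype.ofFinite {w // E v w}
    exact (Continuous.finset_sup'_apply Finset.univ_nonempty fun w _ ↦
      continuous_apply_apply v w.1).congr fun α ↦ Finset.sup'_univ_eq_ciSup _

theorem continuous_inMax [Finite V] : Continuous fun α ↦ inMax E α v :=
  (continuous_outMax (E := Function.swap E)).comp
    (continuous_pi fun a ↦ continuous_pi fun b ↦ continuous_apply_apply b a)

theorem continuous_rhoR [Finite V] : Continuous fun α ↦ rhoR E α v :=
  continuous_const.max (continuous_outMax.sub continuous_inMax)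

theorem rhoR_nonneg : 0 ≤ rhoR E α v :=
  le_max_left _ _

theorem outMax_le_inMax_add_rhoR : outMax E α v ≤ inMax E α v + rhoR E α v :=
  sub_le_iff_le_add'.1 (le_max_right _ _)

theorem alphaR_zero : alphaR α 0 = α := by
  ext u v
  simp [alphaR]

theorem alphaR_add : alphaR α (r + d) = alphaR (alphaR α r) d := by
  ext u v
  simp only [alphaR, Pi.add_apply]
  ring

theorem continuous_alphaR : Continuous (alphaR α) := by
  unfold alphaR
  fun_prop

theorem rhoR_le_rhoR_alphaR_add [Finite V] (hout : ∃ w, E v w) (hin : ∃ u, E u v) (hd : 0 ≤ d) :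
    rhoR E α v ≤ rhoR E (alphaR α d) v + 2 * d v := by
  obtain ⟨w, hvw, hw⟩ := exists_eq_outMax (α := α) hout
  obtain ⟨u, huv, hu⟩ := exists_eq_inMax (α := alphaR α d) hin
  have hout_le : outMax E α v ≤ outMax E (alphaR α d) v + d v := by
    have hle : α v w + d w - d v ≤ outMax E (alphaR α d) v := le_outMax (α := alphaR α d) hvw
    linarith [show 0 ≤ d w from hd w]
  have hin_le : inMax E (alphaR α d) v ≤ inMax E α v + d v := by
    have heq : α u v + d v - d u = inMax E (alphaR α d) v := hu
    linarith [show 0 ≤ d u from hd u, le_inMax (α := α) huv]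
  refine max_le (add_nonneg rhoR_nonneg (mul_nonneg zero_le_two (hd v))) ?_
  linarith [outMax_le_inMax_add_rhoR (E := E) (α := alphaR α d) (v := v)]

/-- A graph function is raising-balanced if no vertex has a positive raising imbalance. -/
def IsRaisingBalanced (E : V → V → Prop) (α : V → V → ℝ) : Prop :=
  ∀ v, rhoR E α v = 0

theorem isRaisingBalanced_iff : IsRaisingBalanced E α ↔ ∀ v, outMax E α v ≤ inMax E α v := by
  simp only [IsRaisingBalanced, rhoR, max_eq_left_iff, sub_nonpos]

theorem isRaisingBalanced_of_forall_edge [Finite V] (hout : ∀ v, ∃ w, E v w)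
    (h : ∀ v w, E v w → ∃ u, E u v ∧ α v w ≤ α u v) : IsRaisingBalanced E α := by
  refine isRaisingBalanced_iff.2 fun v ↦ ?_
  obtain ⟨w, hvw, hw⟩ := exists_eq_outMax (α := α) (hout v)
  obtain ⟨u, huv, hu⟩ := h v w hvw
  exact hw ▸ hu.trans (le_inMax huv)

/-- The nonnegative vectors by which the vertices can be raised, all at once, to make `α`
raising-balanced. The limiting raising vector `r*` is the least of them. -/
def balancingVectors (E : V → V → Prop) (α : V → V → ℝ) : Set (V → ℝ) :=
  {r | 0 ≤ r ∧ IsRaisingBalanced E (alphaR α r)}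

section Iteration

theorem exists_fair [Countable V] [Nonempty V] : ∃ σ : ℕ → V, Fair σ := by
  obtain ⟨f, hf⟩ := exists_surjective_nat V
  refine ⟨fun t ↦ f t.unpair.1, fun v N ↦ ?_⟩
  obtain ⟨k, rfl⟩ := hf v
  exact ⟨Nat.pair k N, Nat.right_le_pair k N, by simp⟩

variable [DecidableEq V] {σ : ℕ → V} {t : ℕ}

theorem raiseOp_eq_alphaR : raiseOp E α v = alphaR α (Pi.single v (rhoR E α v / 2)) := by
  rcases rhoR_nonneg (E := E) (α := α) (v := v).eq_or_lt with h | h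
  · simp [raiseOp, ← h, alphaR_zero]
  · have hrho : rhoR E α v = outMax E α v - inMax E α v :=
      max_eq_right (not_lt.1 fun hneg ↦ h.ne' (max_eq_left hneg.le))
    ext a b
    rw [raiseOp, if_pos h]
    simp only [balanceAt, alphaR, Pi.single_apply, hrho]

theorem rvec_succ : rvec E α σ (t + 1) =
    rvec E α σ t + Pi.single (σ t) (rhoR E (raiseIter E α σ t) (σ t) / 2) := by
  ext u
  simp only [rvec, Pi.add_apply, Pi.single_apply]

theorem raiseIter_eq_alphaR_rvec : raiseIter E α σ t = alphaR α (rvec E α σ t) := by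
  induction t with
  | zero => exact alphaR_zero.symm
  | succ t ih => rw [rvec_succ, alphaR_add, ← ih, raiseIter, raiseOp_eq_alphaR]

theorem rvec_nonneg : 0 ≤ rvec E α σ t := by
  induction t with
  | zero => exact le_rfl
  | succ t ih =>
    rw [rvec_succ]
    exact add_nonneg ih (Pi.single_nonneg.2 (div_nonneg rhoR_nonneg zero_le_two))

theorem rvec_le_of_mem_balancingVectors [Finite V] (hout : ∀ v, ∃ w, E v w)
    (hin : ∀ v, ∃ u, E u v) (hr : r ∈ balancingVectors E α) : rvec E α σ t ≤ r := by
  induction t with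
  | zero => exact hr.1
  | succ t ih =>
    have hstep : rhoR E (raiseIter E α σ t) (σ t) ≤ 2 * (r - rvec E α σ t) (σ t) := by
      have h := rhoR_le_rhoR_alphaR_add (α := raiseIter E α σ t) (hout (σ t)) (hin (σ t))
        (sub_nonneg.2 ih)
      rwa [raiseIter_eq_alphaR_rvec, ← alphaR_add, add_sub_cancel, hr.2 (σ t), zero_add,
        ← raiseIter_eq_alphaR_rvec] at h
    rw [rvec_succ, ← le_sub_iff_add_le']
    exact update_le_iff.2 ⟨by linarith, fun v _ ↦ sub_nonneg.2 (ih v)⟩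

theorem isRaisingBalanced_of_tendsto_rvec [Finite V] (hσ : Fair σ)
    (hr : Tendsto (rvec E α σ) atTop (𝓝 r)) : IsRaisingBalanced E (alphaR α r) := by
  intro v
  have hrho : Tendsto (fun t ↦ rhoR E (alphaR α (rvec E α σ t)) v) atTop
      (𝓝 (rhoR E (alphaR α r) v)) :=
    ((continuous_rhoR.comp continuous_alphaR).tendsto r).comp hr
  have hincr : Tendsto (fun t ↦ 2 * (rvec E α σ (t + 1) v - rvec E α σ t v)) atTop (𝓝 0) := by
    have hrv := tendsto_pi_nhds.1 hr v
    simpa using ((hrv.comp (tendsto_add_atTop_nat 1)).sub hrv).const_mul 2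
  refine tendsto_nhds_unique_of_frequently_eq hrho hincr (frequently_atTop.2 fun N ↦ ?_)
  obtain ⟨t, hNt, rfl⟩ := hσ v N
  refine ⟨t, hNt, ?_⟩
  simp only [rvec_succ, raiseIter_eq_alphaR_rvec, Pi.add_apply, Pi.single_eq_same]
  ring

theorem isLeast_balancingVectors_of_tendsto_rvec [Finite V] (hout : ∀ v, ∃ w, E v w)
    (hin : ∀ v, ∃ u, E u v) (hσ : Fair σ) (hr : Tendsto (rvec E α σ) atTop (𝓝 r)) :
    IsLeast (balancingVectors E α) r :=
  ⟨⟨ge_of_tendsto' hr fun _ ↦ rvec_nonneg, isRaisingBalanced_of_tendsto_rvec hσ hr⟩,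
    fun _ hs ↦ le_of_tendsto' hr fun _ ↦ rvec_le_of_mem_balancingVectors hout hin hs⟩

end Iteration

section Gap

variable {x : ℝ}

/-- The edges of weight exactly `x`. They are used for the shifted graph function `alphaR α r` and
the level `x` of a vertex, where they are the edges that constrain lowering `r`. -/
def tightEdges (E : V → V → Prop) (β : V → V → ℝ) (x : ℝ) : SetRel V V :=
  {e | E e.1 e.2 ∧ β e.1 e.2 = x}

theorem isRaisingBalanced_alphaR_neg_indicator [Finite V] (hout : ∀ v, ∃ w, E v w)
    (hin : ∀ v, ∃ u, E u v) (hβ : IsRaisingBalanced E β) {U : Set V}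
    (hlevel : ∀ v ∈ U, inMax E β v = x)
    (hU : (tightEdges E β x).image U = U ∨ (tightEdges E β x).image U = ∅) {ε : ℝ} (hε : 0 ≤ ε)
    (hεx : ∀ v w, β v w < x → β v w + 2 * ε ≤ x) :
    IsRaisingBalanced E (alphaR β (-U.indicator fun _ ↦ ε)) := by
  classical
  refine isRaisingBalanced_of_forall_edge hout fun v w hvw ↦ ?_
  have hshift : ∀ a b, alphaR β (-U.indicator fun _ ↦ ε) a b =
      β a b - (if b ∈ U then ε else 0) + if a ∈ U then ε else 0 := fun a b ↦ by
    simp only [alphaR, Pi.neg_apply, Set.indicator_apply]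
    ring
  simp only [hshift]
  obtain ⟨u, huv, hu⟩ := exists_eq_inMax (α := β) (hin v)
  have hvw_le : β v w ≤ inMax E β v := (le_outMax hvw).trans (isRaisingBalanced_iff.1 hβ v)
  by_cases hv : v ∈ U
  · rw [hlevel v hv] at hu hvw_le
    have hdrop : w ∉ (tightEdges E β x).image U → β v w + 2 * ε ≤ x := fun hw ↦
      hεx v w (hvw_le.lt_of_ne fun htight ↦ hw ⟨v, hv, hvw, htight⟩)
    -- In the first case an edge of weight `x` from `U` to `v` keeps its weight. In the second the
    -- maximal incoming weight may drop by `ε`, but outgoing edges were below `x` by `2 * ε`.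
    rcases hU with hU | hU
    · obtain ⟨z, hz, hzv, hzx : β z v = x⟩ : v ∈ (tightEdges E β x).image U := hU.symm ▸ hv
      refine ⟨z, hzv, ?_⟩
      rw [hU] at hdrop
      rw [if_pos hv, if_pos hz, hzx]
      split_ifs with hw
      · linarith
      · linarith [hdrop hw]
    · refine ⟨u, huv, ?_⟩
      have := hdrop (hU ▸ Set.notMem_empty w)
      rw [if_pos hv]
      split_ifs <;> linarith
  · refine ⟨u, huv, ?_⟩
    rw [if_neg hv]
    split_ifs <;> linarith

theorem exists_tight_edge_leaving [Finite V] (hout : ∀ v, ∃ w, E v w) (hin : ∀ v, ∃ u, E u v)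
    (hr : IsLeast (balancingVectors E α) r) {S : Set V} (hS : S.Nonempty)
    (hpos : ∀ v ∈ S, 0 < r v) (hlevel : ∀ v ∈ S, level E α r v = x) :
    ∃ v ∈ S, ∃ w ∉ S, E v w ∧ alphaR α r v w = x := by
  by_contra! hclosed
  obtain ⟨U, hUS, hU₀, hU⟩ :=
    exists_le_map_eq_or_eq_bot (f := (tightEdges E (alphaR α r) x).image) (s := S)
      (fun _ _ h ↦ SetRel.image_mono h)
      (by rintro w ⟨v, hv, hvw, hx⟩; by_contra hw; exact hclosed v hv w hw hvw hx)
      hS.ne_empty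
  have hsmall : ∀ᶠ ε : ℝ in 𝓝[>] 0, (∀ v ∈ U, ε ≤ r v) ∧
      ∀ v w, alphaR α r v w < x → alphaR α r v w + 2 * ε ≤ x := by
    simp only [eventually_and, eventually_all]
    refine ⟨fun v hv ↦ ?_, fun v w hvw ↦ ?_⟩
    · filter_upwards [Ioo_mem_nhdsGT (hpos v (hUS hv))] with ε hε using hε.2.le
    · filter_upwards [Ioo_mem_nhdsGT (half_pos (sub_pos.2 hvw))] with ε hε
      linarith [hε.2]
  obtain ⟨ε, ⟨hεr, hεx⟩, hε⟩ := (hsmall.and self_mem_nhdsWithin).exists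
  have hmem : r + -U.indicator (fun _ ↦ ε) ∈ balancingVectors E α := by
    refine ⟨?_, ?_⟩
    · rw [← sub_eq_add_neg, sub_nonneg]
      exact Set.indicator_le' hεr fun v _ ↦ hr.1.1 v
    · rw [alphaR_add]
      exact isRaisingBalanced_alphaR_neg_indicator hout hin hr.1.2 (fun v hv ↦ hlevel v (hUS hv)) hU
        (le_of_lt hε) hεx
  obtain ⟨v, hv⟩ := Set.nonempty_iff_ne_empty.2 hU₀
  have hle : r v ≤ r v + -U.indicator (fun _ ↦ ε) v := hr.2 hmem v
  rw [Set.indicator_of_mem hv] at hle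
  linarith [show 0 < ε from hε]

theorem outMax_le_add_sum_rhoR [Fintype V] (hin : ∀ v, ∃ u, E u v)
    (hx : ∀ u, r v ≤ r u → level E α r u ≤ x) :
    outMax E α v ≤ x + ∑ u with r v ≤ r u, rhoR E α u := by
  have hwf : WellFounded (Function.onFun (· > ·) r) :=
    Set.wellFoundedOn_range.1 (Set.finite_range r).wellFoundedOn
  induction v using hwf.induction with
  | _ v ih =>
    obtain ⟨u, huv, hu⟩ := exists_eq_inMax (α := α) (hin v)
    have hv : outMax E α v ≤ α u v + rhoR E α v := hu ▸ outMax_le_inMax_add_rhoR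
    rcases le_or_gt (r u) (r v) with huv' | huv'
    · have hlevel : α u v + r v - r u ≤ level E α r v := le_inMax (α := alphaR α r) huv
      have hsum : rhoR E α v ≤ ∑ u with r v ≤ r u, rhoR E α u :=
        Finset.single_le_sum (f := rhoR E α) (fun _ _ ↦ rhoR_nonneg) (by simp)
      linarith [hx v le_rfl]
    · have hu : α u v ≤ x + ∑ z with r u ≤ r z, rhoR E α z :=
        (le_outMax huv).trans (ih u huv' fun z hz ↦ hx z (huv'.le.trans hz))
      have hsum : rhoR E α v + ∑ z with r u ≤ r z, rhoR E α z ≤ ∑ z with r v ≤ r z, rhoR E α z := by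
        classical
        rw [← Finset.sum_insert (by simpa using huv')]
        refine Finset.sum_le_sum_of_subset_of_nonneg ?_ fun _ _ _ ↦ rhoR_nonneg
        exact Finset.insert_subset (by simp)
          (Finset.monotone_filter_right _ fun _ _ ↦ huv'.le.trans)
      linarith

theorem exists_lt_and_le_add_sum_rhoR [Fintype V] (hout : ∀ v, ∃ w, E v w)
    (hin : ∀ v, ∃ u, E u v) (hr : IsLeast (balancingVectors E α) r) {c : ℝ} (hc : 0 ≤ c)
    (hex : ∃ v, c < r v) : ∃ v, c < r v ∧ r v ≤ c + ∑ v, rhoR E α v := by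
  obtain ⟨v₀, hv₀, hmax⟩ :=
    Set.exists_max_image {v | c < r v} (level E α r) (Set.toFinite _) hex
  obtain ⟨v, ⟨hv, -⟩, w, hw, hvw, htight⟩ :=
    exists_tight_edge_leaving (S := {v | c < r v ∧ level E α r v = level E α r v₀}) hout hin hr
      ⟨v₀, hv₀, rfl⟩ (fun v hv ↦ hc.trans_lt hv.1) fun v hv ↦ hv.2
  have hwc : r w ≤ c := not_lt.1 fun hcw ↦
    hw ⟨hcw, (hmax w hcw).antisymm (htight ▸ le_inMax hvw)⟩
  have hα : α v w ≤ level E α r v₀ + ∑ u, rhoR E α u :=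
    calc α v w ≤ outMax E α v := le_outMax hvw
      _ ≤ level E α r v₀ + ∑ u with r v ≤ r u, rhoR E α u :=
        outMax_le_add_sum_rhoR hin fun u hu ↦ hmax u (hv.trans_le hu)
      _ ≤ level E α r v₀ + ∑ u, rhoR E α u := by
        gcongr
        · exact fun _ _ _ ↦ rhoR_nonneg
        · exact Finset.filter_subset _ _
  refine ⟨v, hv, ?_⟩
  have hshift : α v w + r w - r v = level E α r v₀ := htight
  linarith

end Gap

theorem height_spread_le_total_imbalance_general [Fintype V] [Nonempty V] [DecidableEq V]
    (hout : ∀ v, ∃ w, E v w) (hin : ∀ v, ∃ u, E u v) {rstar : V → ℝ} {σ : ℕ → V} (hσ : Fair σ)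
    (hrstar : ∀ v, Tendsto (fun t ↦ rvec E α σ t v) atTop (𝓝 (rstar v))) :
    Finset.univ.sup' Finset.univ_nonempty (height rstar) -
        Finset.univ.inf' Finset.univ_nonempty (height rstar) ≤
      ((Fintype.card V : ℝ) - 1) * ∑ v, rhoR E α v := by
  have hleast := isLeast_balancingVectors_of_tendsto_rvec hout hin hσ (tendsto_pi_nhds.2 hrstar)
  obtain ⟨b, -, hb⟩ := Finset.exists_mem_eq_sup' Finset.univ_nonempty (height rstar)
  obtain ⟨a, -, ha⟩ := Finset.exists_mem_eq_inf' Finset.univ_nonempty (height rstar)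
  have hspread : rstar a ≤ rstar b + (Fintype.card V - 1) • ∑ v, rhoR E α v :=
    le_add_card_pred_nsmul_of_gap_le (Finset.sum_nonneg fun _ _ ↦ rhoR_nonneg)
      (fun c ↦ exists_lt_and_le_add_sum_rhoR hout hin hleast (hleast.1.1 c)) a b
  rw [nsmul_eq_mul, Nat.cast_pred Fintype.card_pos] at hspread
  rw [hb, ha, height, height]
  linarith

end Raising

/-- `h ≤ (n−1) · ∑_v ρ_v^R`, where `h = y_max − y_min`. -/
theorem height_spread_le_total_imbalance
    [Fintype V] [Nonempty V] [DecidableEq V] (E : V → V → Prop)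
    (hout : ∀ v, ∃ w, E v w) (hin : ∀ v, ∃ u, E u v)
    (hconn : ∀ u v : V, Relation.ReflTransGen E u v)
    (α : V → V → ℝ) (rstar : V → ℝ)
    (hrstar : ∀ σ : ℕ → V, Fair σ → ∀ v,
      Tendsto (fun t => rvec E α σ t v) atTop (nhds (rstar v))) :
    Finset.univ.sup' Finset.univ_nonempty (height rstar) -
        Finset.univ.inf' Finset.univ_nonempty (height rstar) ≤
      ((Fintype.card V : ℝ) - 1) * ∑ v, rhoR E α v := by
  obtain ⟨σ, hσ⟩ := exists_fair (V := V)
  exact height_spread_le_total_imbalance_general hout hin hσ (hrstar σ hσ)
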